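/- There exist constants ε > 0 and C > 0, depending only on d, D and α, such that for every pair (σ, μ) ∈ Θ_α one has ε ≤ λ₁(σ,μ) ≤ C, λ₂(σ,μ) ≤ C, and λ₂(σ,μ) − λ₁(σ,μ) ≥ ε. -/

import Mathlib

/-- `u` is continuously differentiable on `[0,1]` with derivative `u'`. -/
def IsC1On01 (u u' : ℝ → ℝ) : Prop :=
  (∀ x ∈ Set.Icc (0:ℝ) 1, HasDerivAt u (u' x) x) ∧ ContinuousOn u' (Set.Icc (0:ℝ) 1)

/-- Membership in `V₀`: continuously differentiable on `[0,1]` with `μ`-mean zero. -/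
def MemV0 (μ u u' : ℝ → ℝ) : Prop :=
  IsC1On01 u u' ∧ (∫ x in (0:ℝ)..1, u x * μ x) = 0

/-- `u` is not identically zero on `[0,1]`. -/
def NotZeroOn01 (u : ℝ → ℝ) : Prop := ∃ x ∈ Set.Icc (0:ℝ) 1, u x ≠ 0

/-- The Rayleigh quotient `R(u) = (∫₀¹ u'² σ² μ)/(∫₀¹ u² μ)`. -/
noncomputable def Rayleigh (σ μ u u' : ℝ → ℝ) : ℝ :=
  (∫ x in (0:ℝ)..1, (u' x)^2 * (σ x)^2 * μ x) / (∫ x in (0:ℝ)..1, (u x)^2 * μ x)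

/-- The first variational eigenvalue: `2λ₁ = inf{R(u) : u ∈ V₀, u ≠ 0}`. -/
noncomputable def lam1 (σ μ : ℝ → ℝ) : ℝ :=
  (1/2) * sInf { r : ℝ | ∃ u u' : ℝ → ℝ,
    MemV0 μ u u' ∧ NotZeroOn01 u ∧ r = Rayleigh σ μ u u' }

/-- The second variational eigenvalue:
`2λ₂ = inf { sup {R(u) : u ∈ S, u ≠ 0} : S a two-dimensional subspace of V₀ }`. -/
noncomputable def lam2 (σ μ : ℝ → ℝ) : ℝ :=
  (1/2) * sInf { r : ℝ |
    ∃ u₁ u₁' u₂ u₂' : ℝ → ℝ, MemV0 μ u₁ u₁' ∧ MemV0 μ u₂ u₂' ∧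
      (∀ a b : ℝ, (∀ x ∈ Set.Icc (0:ℝ) 1, a * u₁ x + b * u₂ x = 0) → a = 0 ∧ b = 0) ∧
      r = sSup { s : ℝ | ∃ a b : ℝ,
        NotZeroOn01 (fun x => a * u₁ x + b * u₂ x) ∧
        s = Rayleigh σ μ (fun x => a * u₁ x + b * u₂ x)
              (fun x => a * u₁' x + b * u₂' x) } }

/-!
For `u` of `μ`-mean zero put `F x = ∫₀ˣ u μ`, so that `F 0 = F 1 = 0`. Integration by parts and
Cauchy–Schwarz show that the Poincaré inequality `κ ∫ u² μ ≤ ∫ u'² w`, `w = σ² μ`, is equivalent to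
the Dirichlet inequality `κ ∫ F² / w ≤ ∫ F'² / μ`. The trivial bound `F² ≤ (∫ u² μ) (∫ μ)` bounds
`λ₁` from below, and the plane spanned by the centered `x` and `x² - x` bounds `λ₂` from above.

For the gap, every plane in `V₀` contains some `u ≠ 0` with `F (1/2) = 0`. Let `κ = 2 λ₁` and let
`φ` be the tent with `φ 0 = φ 1 = 0`, `φ (1/2) = 1` and `φ' / μ` constant on each half. Then `|F|`
has the same energy as `F` and is energy-orthogonal to `φ`, so the Dirichlet inequality for
`|F| + t φ`, optimized in `t`, gives
`(κ ∫ |F| φ / w)² ≤ (∫ F'² / μ - κ ∫ F² / w) ∫ φ'² / μ`.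
Since `F² ≤ (∫ u² μ) (∫ μ) φ`, the left side dominates a power of `∫ F² / w`. Hence the Poincaré
inequality for this `u` holds with a constant exceeding `κ` by a quantitative amount.
-/

open Set MeasureTheory Filter Topology

section AbsoluteValue

lemma sq_deriv_abs {F : ℝ → ℝ} {x : ℝ} (hF : ContinuousAt F x)
    (hF_abs : DifferentiableAt ℝ (fun y ↦ |F y|) x) :
    deriv (fun y ↦ |F y|) x ^ 2 = deriv F x ^ 2 := by
  rcases lt_trichotomy (F x) 0 with hneg | hzero | hpos
  · have hev : (fun y ↦ |F y|) =ᶠ[𝓝 x] fun y ↦ -F y :=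
      (hF.eventually_lt_const hneg).mono fun y hy ↦ abs_of_neg hy
    rw [hev.deriv_eq, deriv.fun_neg, neg_sq]
  · have hmin : IsLocalMin (fun y ↦ |F y|) x :=
      Eventually.of_forall fun y ↦ by simp [hzero]
    have hF_deriv : HasDerivAt F 0 x := by
      have h := hF_abs.hasDerivAt
      rw [hmin.deriv_eq_zero, hasDerivAt_iff_isLittleO] at h
      rw [hasDerivAt_iff_isLittleO]
      simpa [hzero] using h
    rw [hmin.deriv_eq_zero, hF_deriv.deriv]
  · have hev : (fun y ↦ |F y|) =ᶠ[𝓝 x] F :=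
      (hF.eventually_const_lt hpos).mono fun y hy ↦ abs_of_pos hy
    rw [hev.deriv_eq]

lemma absolutelyContinuousOnInterval_abs {F : ℝ → ℝ} {a b : ℝ}
    (hF : AbsolutelyContinuousOnInterval F a b) :
    AbsolutelyContinuousOnInterval (fun x ↦ |F x|) a b := by
  refine squeeze_zero (fun _ ↦ Finset.sum_nonneg fun _ _ ↦ dist_nonneg) (fun _ ↦ ?_) hF
  exact Finset.sum_le_sum fun _ _ ↦ abs_abs_sub_abs_le _ _

lemma ae_sq_deriv_abs {F : ℝ → ℝ} {a b : ℝ} (hF : AbsolutelyContinuousOnInterval F a b) :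
    ∀ᵐ x, x ∈ uIcc a b → deriv (fun y ↦ |F y|) x ^ 2 = deriv F x ^ 2 := by
  filter_upwards [hF.ae_differentiableAt,
    (absolutelyContinuousOnInterval_abs hF).ae_differentiableAt] with x hx hx_abs hmem
  exact sq_deriv_abs (hx hmem).continuousAt (hx_abs hmem)

end AbsoluteValue

section Calculus

variable {a b : ℝ}

lemma sq_integral_mul_le (hab : a ≤ b) {f g m : ℝ → ℝ} (hm : ∀ x ∈ Icc a b, 0 < m x)
    (hfg : IntervalIntegrable (fun x ↦ f x * g x) volume a b)
    (hf : IntervalIntegrable (fun x ↦ f x ^ 2 * m x) volume a b)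
    (hg : IntervalIntegrable (fun x ↦ g x ^ 2 / m x) volume a b) :
    (∫ x in a..b, f x * g x) ^ 2 ≤
      (∫ x in a..b, f x ^ 2 * m x) * ∫ x in a..b, g x ^ 2 / m x := by
  have hdiscrim := discrim_le_zero (a := ∫ x in a..b, f x ^ 2 * m x)
    (b := 2 * ∫ x in a..b, f x * g x) (c := ∫ x in a..b, g x ^ 2 / m x) fun t ↦ by
      calc 0 ≤ ∫ x in a..b, (t * f x * m x + g x) ^ 2 / m x :=
            intervalIntegral.integral_nonneg hab fun x hx ↦ div_nonneg (sq_nonneg _) (hm x hx).le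
        _ = ∫ x in a..b, t * t * (f x ^ 2 * m x) + 2 * t * (f x * g x) + g x ^ 2 / m x := by
            refine intervalIntegral.integral_congr fun x hx ↦ ?_
            have := (hm x (uIcc_of_le hab ▸ hx)).ne'
            field_simp
            ring
        _ = _ := by
            rw [intervalIntegral.integral_add ((hf.const_mul _).add (hfg.const_mul _)) hg,
              intervalIntegral.integral_add (hf.const_mul _) (hfg.const_mul _),
              intervalIntegral.integral_const_mul, intervalIntegral.integral_const_mul]
            ring
  rw [discrim] at hdiscrim
  linarith

lemma exists_forall_hasDerivAt_of_continuousOn (hab : a ≤ b) {f : ℝ → ℝ}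
    (hf : ContinuousOn f (Icc a b)) : ∃ F : ℝ → ℝ, ∀ x ∈ Icc a b, HasDerivAt F (f x) x := by
  have hcont : Continuous (IccExtend hab (domRestrict (Icc a b) f)) :=
    hf.domRestrict.Icc_extend'
  refine ⟨fun x ↦ ∫ t in a..x, IccExtend hab (domRestrict (Icc a b) f) t, fun x hx ↦ ?_⟩
  have hderiv := (hcont.integral_hasStrictDerivAt a x).hasDerivAt
  rwa [IccExtend_of_mem hab _ hx, domRestrict_apply] at hderiv

end Calculus

lemma mul_le_of_sq_le_mul {κ x y z : ℝ} (hκ : 0 ≤ κ) (hx : 0 ≤ x) (hz : 0 ≤ z)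
    (hyx : κ * y ≤ x) (hsq : x ^ 2 ≤ y * z) : κ * x ≤ z := by
  rcases hx.eq_or_lt with rfl | hx
  · simpa using hz
  · refine le_of_mul_le_mul_left ?_ hx
    calc x * (κ * x) = κ * x ^ 2 := by ring
      _ ≤ κ * (y * z) := by gcongr
      _ = κ * y * z := by ring
      _ ≤ x * z := by gcongr

/-- A continuous positive density on `[0, 1]`. -/
structure IsWeight (m : ℝ → ℝ) : Prop where
  continuousOn : ContinuousOn m (Icc 0 1)
  pos : ∀ x ∈ Icc (0 : ℝ) 1, 0 < m x

namespace IsWeight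

variable {m : ℝ → ℝ}

lemma inv (hm : IsWeight m) : IsWeight fun x ↦ (m x)⁻¹ where
  continuousOn := hm.continuousOn.inv₀ fun x hx ↦ (hm.pos x hx).ne'
  pos x hx := inv_pos.2 (hm.pos x hx)

lemma intervalIntegrable_mul (hm : IsWeight m) {f : ℝ → ℝ} (hf : ContinuousOn f (Icc 0 1)) :
    IntervalIntegrable (fun x ↦ f x * m x) volume 0 1 :=
  (hf.mul hm.continuousOn).intervalIntegrable_of_Icc zero_le_one

lemma intervalIntegrable (hm : IsWeight m) {a b : ℝ} (ha : a ∈ Icc (0 : ℝ) 1)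
    (hb : b ∈ Icc (0 : ℝ) 1) : IntervalIntegrable m volume a b :=
  (hm.continuousOn.mono (uIcc_subset_Icc ha hb)).intervalIntegrable

lemma integral_nonneg (hm : IsWeight m) {a b : ℝ} (ha : 0 ≤ a) (hab : a ≤ b) (hb : b ≤ 1) :
    0 ≤ ∫ x in a..b, m x :=
  intervalIntegral.integral_nonneg hab fun x hx ↦ (hm.pos x (Icc_subset_Icc ha hb hx)).le

lemma integral_pos (hm : IsWeight m) {a b : ℝ} (ha : 0 ≤ a) (hab : a < b) (hb : b ≤ 1) :
    0 < ∫ x in a..b, m x :=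
  intervalIntegral.intervalIntegral_pos_of_pos_on
    (hm.intervalIntegrable ⟨ha, hab.le.trans hb⟩ ⟨ha.trans hab.le, hb⟩)
    (fun x hx ↦ hm.pos x ⟨ha.trans hx.1.le, hx.2.le.trans hb⟩) hab

lemma intervalIntegrable_zero_one (hm : IsWeight m) : IntervalIntegrable m volume 0 1 :=
  hm.continuousOn.intervalIntegrable_of_Icc zero_le_one

lemma integral_mono_interval (hm : IsWeight m) {a b : ℝ} (ha : 0 ≤ a) (hab : a ≤ b)
    (hb : b ≤ 1) : ∫ x in a..b, m x ≤ ∫ x in (0 : ℝ)..1, m x :=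
  intervalIntegral.integral_mono_interval ha hab hb
    (ae_restrict_of_forall_mem measurableSet_Ioc fun x hx ↦
      (hm.pos x (Ioc_subset_Icc_self hx)).le) hm.intervalIntegrable_zero_one

lemma integral_sq_mul_nonneg (hm : IsWeight m) (v : ℝ → ℝ) :
    0 ≤ ∫ x in (0 : ℝ)..1, v x ^ 2 * m x :=
  intervalIntegral.integral_nonneg zero_le_one fun x hx ↦
    mul_nonneg (sq_nonneg _) (hm.pos x hx).le

lemma integral_sq_div_nonneg (hm : IsWeight m) (v : ℝ → ℝ) :
    0 ≤ ∫ x in (0 : ℝ)..1, v x ^ 2 / m x :=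
  hm.inv.integral_sq_mul_nonneg v

lemma integral_sq_mul_pos (hm : IsWeight m) {u : ℝ → ℝ} (hu : ContinuousOn u (Icc 0 1))
    (hu_ne : NotZeroOn01 u) : 0 < ∫ x in (0 : ℝ)..1, u x ^ 2 * m x := by
  obtain ⟨x₀, hx₀, hux₀⟩ := hu_ne
  refine intervalIntegral.integral_pos zero_lt_one ((hu.pow 2).mul hm.continuousOn)
    (fun x hx ↦ mul_nonneg (sq_nonneg _) (hm.pos x (Ioc_subset_Icc_self hx)).le) ⟨x₀, hx₀, ?_⟩
  have := hm.pos x₀ hx₀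
  positivity

end IsWeight

/-- The function `v` shifted to have `μ`-mean zero. -/
noncomputable def centered (μ v : ℝ → ℝ) (x : ℝ) : ℝ :=
  v x - (∫ t in (0 : ℝ)..1, v t * μ t) / ∫ t in (0 : ℝ)..1, μ t

namespace IsC1On01

variable {u u' v v' : ℝ → ℝ}

lemma continuousOn (hu : IsC1On01 u u') : ContinuousOn u (Icc 0 1) :=
  fun x hx ↦ (hu.1 x hx).continuousAt.continuousWithinAt

lemma absolutelyContinuousOnInterval (hu : IsC1On01 u u') :
    AbsolutelyContinuousOnInterval u 0 1 := by
  obtain ⟨K, hK⟩ := isCompact_Icc.exists_bound_of_continuousOn hu.2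
  refine LipschitzOnWith.absolutelyContinuousOnInterval (K := K.toNNReal) ?_
  rw [uIcc_of_le zero_le_one]
  exact (convex_Icc 0 1).lipschitzOnWith_of_nnnorm_hasDerivWithin_le
    (fun x hx ↦ (hu.1 x hx).hasDerivWithinAt) fun x hx ↦ NNReal.le_toNNReal_of_coe_le (hK x hx)

lemma integral_mul_deriv (hu : IsC1On01 u u') {G : ℝ → ℝ}
    (hG : AbsolutelyContinuousOnInterval G 0 1) (hG0 : G 0 = 0) (hG1 : G 1 = 0) :
    ∫ x in (0 : ℝ)..1, u x * deriv G x = -∫ x in (0 : ℝ)..1, u' x * G x := by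
  have hderiv : ∫ x in (0 : ℝ)..1, deriv u x * G x = ∫ x in (0 : ℝ)..1, u' x * G x := by
    refine intervalIntegral.integral_congr fun x hx ↦ ?_
    rw [uIcc_of_le zero_le_one] at hx
    simp only [(hu.1 x hx).deriv]
  rw [hu.absolutelyContinuousOnInterval.integral_mul_deriv_eq_deriv_mul hG, hderiv, hG0, hG1]
  ring

lemma linearCombination (hu : IsC1On01 u u') (hv : IsC1On01 v v') (a b : ℝ) :
    IsC1On01 (fun x ↦ a * u x + b * v x) fun x ↦ a * u' x + b * v' x :=
  ⟨fun x hx ↦ ((hu.1 x hx).const_mul a).add ((hv.1 x hx).const_mul b),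
    (hu.2.const_mul a).add (hv.2.const_mul b)⟩

lemma memV0_centered {m : ℝ → ℝ} (hm : IsWeight m) (hu : IsC1On01 u u') :
    MemV0 m (centered m u) u' := by
  have hmass : ∫ t in (0 : ℝ)..1, m t ≠ 0 := (hm.integral_pos le_rfl one_pos le_rfl).ne'
  refine ⟨⟨fun x hx ↦ (hu.1 x hx).sub_const _, hu.2⟩, ?_⟩
  simp only [centered, sub_mul]
  rw [intervalIntegral.integral_sub (hm.intervalIntegrable_mul hu.continuousOn)
    (hm.intervalIntegrable_mul continuousOn_const), intervalIntegral.integral_const_mul,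
    div_mul_cancel₀ _ hmass, sub_self]

end IsC1On01

lemma MemV0.linearCombination {m u u' v v' : ℝ → ℝ} (hm : IsWeight m) (hu : MemV0 m u u')
    (hv : MemV0 m v v') (a b : ℝ) :
    MemV0 m (fun x ↦ a * u x + b * v x) fun x ↦ a * u' x + b * v' x := by
  refine ⟨hu.1.linearCombination hv.1 a b, ?_⟩
  simp only [add_mul, mul_assoc]
  rw [intervalIntegral.integral_add ((hm.intervalIntegrable_mul hu.1.continuousOn).const_mul a)
    ((hm.intervalIntegrable_mul hv.1.continuousOn).const_mul b),
    intervalIntegral.integral_const_mul, intervalIntegral.integral_const_mul, hu.2, hv.2]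
  simp only [mul_zero, add_zero]

lemma exists_memV0_of_continuousOn {m f : ℝ → ℝ} (hm : IsWeight m)
    (hf : ContinuousOn f (Icc 0 1)) : ∃ u, MemV0 m u f := by
  obtain ⟨F, hF⟩ := exists_forall_hasDerivAt_of_continuousOn zero_le_one hf
  exact ⟨_, IsC1On01.memV0_centered hm ⟨hF, hf⟩⟩

/-- The weighted Poincaré (spectral gap) inequality with constant `κ` for mass density `m` and
conductivity `w`, on the test functions with `m`-mean zero. -/
def PoincareBound (m w : ℝ → ℝ) (κ : ℝ) : Prop :=
  ∀ u u' : ℝ → ℝ, MemV0 m u u' →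
    κ * ∫ x in (0 : ℝ)..1, u x ^ 2 * m x ≤ ∫ x in (0 : ℝ)..1, u' x ^ 2 * w x

/-- Testing with the `u` such that `w u' = -G` gives `∫ u G' = ∫ G² / w`. -/
lemma PoincareBound.mul_integral_sq_div_le {m w G : ℝ → ℝ} {κ : ℝ} (hκ : 0 ≤ κ)
    (hm : IsWeight m) (hw : IsWeight w) (h : PoincareBound m w κ)
    (hG : AbsolutelyContinuousOnInterval G 0 1) (hG0 : G 0 = 0) (hG1 : G 1 = 0)
    (hG_int : IntervalIntegrable (fun x ↦ deriv G x ^ 2 / m x) volume 0 1) :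
    κ * ∫ x in (0 : ℝ)..1, G x ^ 2 / w x ≤ ∫ x in (0 : ℝ)..1, deriv G x ^ 2 / m x := by
  have hG_cont : ContinuousOn G (Icc 0 1) := uIcc_of_le (zero_le_one' ℝ) ▸ hG.continuousOn
  obtain ⟨u, hu⟩ := exists_memV0_of_continuousOn hm
    (hG_cont.neg.div hw.continuousOn fun x hx ↦ (hw.pos x hx).ne')
  have hcross : ∫ x in (0 : ℝ)..1, u x * deriv G x = ∫ x in (0 : ℝ)..1, G x ^ 2 / w x := by
    rw [hu.1.integral_mul_deriv hG hG0 hG1, ← intervalIntegral.integral_neg]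
    congr with x
    simp only [Pi.div_apply, Pi.neg_apply]
    ring
  have henergy : κ * ∫ x in (0 : ℝ)..1, u x ^ 2 * m x ≤ ∫ x in (0 : ℝ)..1, G x ^ 2 / w x := by
    refine (h u _ hu).trans_eq (intervalIntegral.integral_congr fun x hx ↦ ?_)
    rw [uIcc_of_le zero_le_one] at hx
    have := (hw.pos x hx).ne'
    simp only [Pi.div_apply, Pi.neg_apply]
    field_simp
  have hG_deriv : IntervalIntegrable (fun x ↦ u x * deriv G x) volume 0 1 :=
    hG.intervalIntegrable_deriv.continuousOn_mul
      (by rw [uIcc_of_le zero_le_one]; exact hu.1.continuousOn)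
  have hCauchySchwarz := sq_integral_mul_le zero_le_one hm.pos hG_deriv
    (hm.intervalIntegrable_mul (hu.1.continuousOn.fun_pow 2)) hG_int
  rw [hcross] at hCauchySchwarz
  exact mul_le_of_sq_le_mul hκ (hw.integral_sq_div_nonneg _) (hm.integral_sq_div_nonneg _)
    henergy hCauchySchwarz

/-- The primitive `x ↦ ∫₀ˣ u m` of the density `u m`; it vanishes at both ends when `u` has
`m`-mean zero, and turns the Poincaré inequality into a Dirichlet problem. -/
noncomputable def flux (m u : ℝ → ℝ) (x : ℝ) : ℝ := ∫ t in (0 : ℝ)..x, u t * m t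

section Flux

variable {m w u u' : ℝ → ℝ}

@[simp] lemma flux_zero : flux m u 0 = 0 := intervalIntegral.integral_same

lemma absolutelyContinuousOnInterval_flux
    (hu : IntervalIntegrable (fun x ↦ u x * m x) volume 0 1) :
    AbsolutelyContinuousOnInterval (flux m u) 0 1 :=
  hu.absolutelyContinuousOnInterval_intervalIntegral left_mem_uIcc

lemma continuousOn_flux (hu : IntervalIntegrable (fun x ↦ u x * m x) volume 0 1) :
    ContinuousOn (flux m u) (Icc 0 1) :=
  uIcc_of_le (zero_le_one' ℝ) ▸ (absolutelyContinuousOnInterval_flux hu).continuousOn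

lemma ae_deriv_flux (hu : IntervalIntegrable (fun x ↦ u x * m x) volume 0 1) :
    ∀ᵐ x, x ∈ uIcc (0 : ℝ) 1 → deriv (flux m u) x = u x * m x := by
  filter_upwards [hu.ae_hasDerivAt_integral] with x hx hmem
  exact (hx hmem 0 left_mem_uIcc).deriv

lemma flux_eq_neg_integral (hu : IntervalIntegrable (fun x ↦ u x * m x) volume 0 1)
    (hu1 : flux m u 1 = 0) {x : ℝ} (hx : x ∈ Icc (0 : ℝ) 1) :
    flux m u x = -∫ t in x..1, u t * m t := by
  have hsplit := intervalIntegral.integral_add_adjacent_intervals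
    (hu.mono_set (uIcc_subset_uIcc_left (uIcc_of_le (zero_le_one' ℝ) ▸ hx)))
    (hu.mono_set (uIcc_subset_uIcc_right (uIcc_of_le (zero_le_one' ℝ) ▸ hx)))
  simp only [flux] at hu1 ⊢
  linarith

lemma IsWeight.sq_integral_mul_le (hm : IsWeight m) (hu : ContinuousOn u (Icc 0 1)) {a b : ℝ}
    (ha : 0 ≤ a) (hab : a ≤ b) (hb : b ≤ 1) :
    (∫ x in a..b, u x * m x) ^ 2 ≤
      (∫ x in (0 : ℝ)..1, u x ^ 2 * m x) * ∫ x in a..b, m x := by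
  have hIcc : Icc a b ⊆ Icc 0 1 := Icc_subset_Icc ha hb
  have hm_div : ∫ x in a..b, m x ^ 2 / m x = ∫ x in a..b, m x := by
    refine intervalIntegral.integral_congr fun x hx ↦ ?_
    have := (hm.pos x (hIcc (uIcc_of_le hab ▸ hx))).ne'
    field_simp
  have hCauchySchwarz := _root_.sq_integral_mul_le hab (fun x hx ↦ hm.pos x (hIcc hx))
    (((hu.mul hm.continuousOn).mono hIcc).intervalIntegrable_of_Icc hab)
    ((((hu.fun_pow 2).mul hm.continuousOn).mono hIcc).intervalIntegrable_of_Icc hab)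
    ((((hm.continuousOn.fun_pow 2).mul hm.inv.continuousOn).mono
      hIcc).intervalIntegrable_of_Icc hab)
  rw [hm_div] at hCauchySchwarz
  refine hCauchySchwarz.trans (mul_le_mul_of_nonneg_right ?_
    (hm.integral_nonneg ha hab hb))
  refine intervalIntegral.integral_mono_interval ha hab hb ?_
    (hm.intervalIntegrable_mul (hu.fun_pow 2))
  refine ae_restrict_of_forall_mem measurableSet_Ioc fun x hx ↦ ?_
  exact mul_nonneg (sq_nonneg _) (hm.pos x (Ioc_subset_Icc_self hx)).le

lemma sq_flux_le_left (hm : IsWeight m) (hu : ContinuousOn u (Icc 0 1)) {x : ℝ}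
    (hx : x ∈ Icc (0 : ℝ) 1) :
    flux m u x ^ 2 ≤ (∫ t in (0 : ℝ)..1, u t ^ 2 * m t) * ∫ t in (0 : ℝ)..x, m t :=
  hm.sq_integral_mul_le hu le_rfl hx.1 hx.2

lemma sq_flux_le_right (hm : IsWeight m) (hu : ContinuousOn u (Icc 0 1))
    (hu1 : flux m u 1 = 0) {x : ℝ} (hx : x ∈ Icc (0 : ℝ) 1) :
    flux m u x ^ 2 ≤ (∫ t in (0 : ℝ)..1, u t ^ 2 * m t) * ∫ t in x..1, m t := by
  rw [flux_eq_neg_integral (hm.intervalIntegrable_mul hu) hu1 hx, neg_sq]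
  exact hm.sq_integral_mul_le hu hx.1 hx.2 le_rfl

lemma MemV0.mul_integral_sq_le (hm : IsWeight m) (hw : IsWeight w) (hu : MemV0 m u u') {κ : ℝ}
    (hκ : 0 ≤ κ)
    (hflux : κ * ∫ x in (0 : ℝ)..1, flux m u x ^ 2 / w x ≤ ∫ x in (0 : ℝ)..1, u x ^ 2 * m x) :
    κ * ∫ x in (0 : ℝ)..1, u x ^ 2 * m x ≤ ∫ x in (0 : ℝ)..1, u' x ^ 2 * w x := by
  have hum := hm.intervalIntegrable_mul hu.1.continuousOn
  have hflux_cont := continuousOn_flux hum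
  have hparts : ∫ x in (0 : ℝ)..1, u' x * flux m u x = -∫ x in (0 : ℝ)..1, u x ^ 2 * m x := by
    rw [← neg_eq_iff_eq_neg,
      ← hu.1.integral_mul_deriv (absolutelyContinuousOnInterval_flux hum) flux_zero hu.2]
    refine intervalIntegral.integral_congr_ae ?_
    filter_upwards [ae_deriv_flux hum] with x hx hmem
    rw [hx (uIoc_subset_uIcc hmem)]
    ring
  have hCauchySchwarz := sq_integral_mul_le zero_le_one hw.pos
    ((hu.1.2.mul hflux_cont).intervalIntegrable_of_Icc zero_le_one)
    (hw.intervalIntegrable_mul (hu.1.2.fun_pow 2))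
    (hw.inv.intervalIntegrable_mul (hflux_cont.fun_pow 2))
  rw [hparts, neg_sq, mul_comm] at hCauchySchwarz
  exact mul_le_of_sq_le_mul hκ (hm.integral_sq_mul_nonneg u) (hw.integral_sq_mul_nonneg u') hflux
    hCauchySchwarz

end Flux

lemma poincareBound_inv_integral_mul_integral_inv {m w : ℝ → ℝ} (hm : IsWeight m)
    (hw : IsWeight w) :
    PoincareBound m w ((∫ x in (0 : ℝ)..1, m x) * ∫ x in (0 : ℝ)..1, (w x)⁻¹)⁻¹ := by
  intro u u' hu
  have hM := hm.integral_pos le_rfl one_pos le_rfl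
  have hS := hw.inv.integral_pos le_rfl one_pos le_rfl
  refine hu.mul_integral_sq_le hm hw (by positivity) ?_
  rw [inv_mul_le_iff₀ (by positivity), mul_right_comm,
    mul_comm (∫ x in (0 : ℝ)..1, m x), ← intervalIntegral.integral_const_mul]
  have hflux := continuousOn_flux (hm.intervalIntegrable_mul hu.1.continuousOn)
  refine intervalIntegral.integral_mono_on zero_le_one
    (hw.inv.intervalIntegrable_mul (hflux.fun_pow 2))
    (hw.inv.intervalIntegrable_mul continuousOn_const) fun x hx ↦ ?_
  refine mul_le_mul_of_nonneg_right ?_ (hw.inv.pos x hx).le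
  refine (sq_flux_le_left hm hu.1.continuousOn hx).trans
    (mul_le_mul_of_nonneg_left ?_ (hm.integral_sq_mul_nonneg u))
  exact hm.integral_mono_interval le_rfl hx.1 hx.2

/-- The step function that jumps at `c` and whose flux is the tent `φ` with `φ 0 = φ 1 = 0` and
`φ c = 1`. -/
noncomputable def balancedStep (m : ℝ → ℝ) (c x : ℝ) : ℝ :=
  if x ≤ c then (∫ t in (0 : ℝ)..c, m t)⁻¹ else -(∫ t in c..1, m t)⁻¹

section BalancedStep

variable {m f : ℝ → ℝ} {c x : ℝ}

lemma intervalIntegrable_balancedStep_mul (hf : IntervalIntegrable f volume 0 1) :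
    IntervalIntegrable (fun x ↦ balancedStep m c x * f x) volume 0 1 := by
  have hstep : Measurable (balancedStep m c) :=
    Measurable.ite measurableSet_Iic measurable_const measurable_const
  refine ⟨hf.1.bdd_mul (c := max |(∫ t in (0 : ℝ)..c, m t)⁻¹| |(∫ t in c..1, m t)⁻¹|)
    hstep.aestronglyMeasurable (.of_forall fun x ↦ ?_), by simp⟩
  rw [balancedStep, Real.norm_eq_abs]
  split_ifs
  · exact le_max_left _ _
  · exact abs_neg (∫ t in c..1, m t)⁻¹ ▸ le_max_right _ _

lemma integral_balancedStep_mul_of_le (hx : 0 ≤ x) (hxc : x ≤ c) :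
    ∫ t in (0 : ℝ)..x, balancedStep m c t * f t =
      (∫ t in (0 : ℝ)..c, m t)⁻¹ * ∫ t in (0 : ℝ)..x, f t := by
  rw [← intervalIntegral.integral_const_mul]
  refine intervalIntegral.integral_congr fun t ht ↦ ?_
  rw [uIcc_of_le hx] at ht
  simp only [balancedStep, if_pos (ht.2.trans hxc)]

lemma integral_balancedStep_mul_of_ge (hcx : c ≤ x) (hx : x ≤ 1) :
    ∫ t in x..1, balancedStep m c t * f t =
      -((∫ t in c..1, m t)⁻¹ * ∫ t in x..1, f t) := by
  rw [← neg_mul, ← intervalIntegral.integral_const_mul]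
  refine intervalIntegral.integral_congr_uIoo fun t ht ↦ ?_
  rw [uIoo_of_le hx] at ht
  simp only [balancedStep, if_neg (hcx.trans_lt ht.1).not_ge]

lemma integral_balancedStep_mul (hf : IntervalIntegrable f volume 0 1)
    (hc : c ∈ Icc (0 : ℝ) 1) :
    ∫ t in (0 : ℝ)..1, balancedStep m c t * f t =
      (∫ t in (0 : ℝ)..c, m t)⁻¹ * (∫ t in (0 : ℝ)..c, f t) -
        (∫ t in c..1, m t)⁻¹ * ∫ t in c..1, f t := by
  have hstep := intervalIntegrable_balancedStep_mul (m := m) (c := c) hf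
  have hc' : c ∈ uIcc (0 : ℝ) 1 := uIcc_of_le (zero_le_one' ℝ) ▸ hc
  rw [← intervalIntegral.integral_add_adjacent_intervals
    (hstep.mono_set (uIcc_subset_uIcc_left hc')) (hstep.mono_set (uIcc_subset_uIcc_right hc')),
    integral_balancedStep_mul_of_le hc.1 le_rfl, integral_balancedStep_mul_of_ge le_rfl hc.2,
    sub_eq_add_neg]

lemma integral_balancedStep_mul_deriv {G : ℝ → ℝ}
    (hG : AbsolutelyContinuousOnInterval G 0 1) (hc : c ∈ Icc (0 : ℝ) 1) (hG0 : G 0 = 0)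
    (hGc : G c = 0) (hG1 : G 1 = 0) :
    ∫ t in (0 : ℝ)..1, balancedStep m c t * deriv G t = 0 := by
  have hc' : c ∈ uIcc (0 : ℝ) 1 := uIcc_of_le (zero_le_one' ℝ) ▸ hc
  rw [integral_balancedStep_mul hG.intervalIntegrable_deriv hc,
    (hG.mono (uIcc_subset_uIcc_left hc')).integral_deriv_eq_sub,
    (hG.mono (uIcc_subset_uIcc_right hc')).integral_deriv_eq_sub, hG0, hGc, hG1]
  ring

lemma flux_balancedStep_one (hm : IsWeight m) (hc : c ∈ Ioo (0 : ℝ) 1) :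
    flux m (balancedStep m c) 1 = 0 := by
  rw [flux, integral_balancedStep_mul hm.intervalIntegrable_zero_one
    (Ioo_subset_Icc_self hc),
    inv_mul_cancel₀ (hm.integral_pos le_rfl hc.1 hc.2.le).ne',
    inv_mul_cancel₀ (hm.integral_pos hc.1.le hc.2 le_rfl).ne', sub_self]

lemma integral_sq_balancedStep_mul (hm : IsWeight m) (hc : c ∈ Ioo (0 : ℝ) 1) :
    ∫ x in (0 : ℝ)..1, balancedStep m c x ^ 2 * m x =
      (∫ x in (0 : ℝ)..c, m x)⁻¹ + (∫ x in c..1, m x)⁻¹ := by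
  simp only [sq, mul_assoc]
  rw [integral_balancedStep_mul
      (intervalIntegrable_balancedStep_mul hm.intervalIntegrable_zero_one)
      (Ioo_subset_Icc_self hc),
    integral_balancedStep_mul_of_le hc.1.le le_rfl, integral_balancedStep_mul_of_ge le_rfl hc.2.le,
    inv_mul_cancel₀ (hm.integral_pos le_rfl hc.1 hc.2.le).ne',
    inv_mul_cancel₀ (hm.integral_pos hc.1.le hc.2 le_rfl).ne']
  ring

lemma sq_flux_le_flux_balancedStep {u : ℝ → ℝ} (hm : IsWeight m) (hc : c ∈ Ioo (0 : ℝ) 1)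
    (hu : ContinuousOn u (Icc 0 1)) (hu1 : flux m u 1 = 0) (hx : x ∈ Icc (0 : ℝ) 1) :
    flux m u x ^ 2 ≤ (∫ t in (0 : ℝ)..1, u t ^ 2 * m t) * (∫ t in (0 : ℝ)..1, m t) *
      flux m (balancedStep m c) x := by
  have hE := hm.integral_sq_mul_nonneg u
  rw [mul_assoc]
  rcases le_total x c with hxc | hcx
  · refine (sq_flux_le_left hm hu hx).trans (mul_le_mul_of_nonneg_left ?_ hE)
    have hc_pos := hm.integral_pos le_rfl hc.1 hc.2.le
    rw [flux, integral_balancedStep_mul_of_le hx.1 hxc, ← mul_assoc]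
    refine le_mul_of_one_le_left (hm.integral_nonneg le_rfl hx.1 hx.2) ?_
    rw [← div_eq_mul_inv, one_le_div hc_pos]
    exact hm.integral_mono_interval le_rfl hc.1.le hc.2.le
  · refine (sq_flux_le_right hm hu hu1 hx).trans (mul_le_mul_of_nonneg_left ?_ hE)
    have hc_pos := hm.integral_pos hc.1.le hc.2 le_rfl
    rw [flux_eq_neg_integral (intervalIntegrable_balancedStep_mul
      hm.intervalIntegrable_zero_one) (flux_balancedStep_one hm hc) hx,
      integral_balancedStep_mul_of_ge hcx hx.2, neg_neg, ← mul_assoc]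
    refine le_mul_of_one_le_left (hm.integral_nonneg hx.1 hx.2 le_rfl) ?_
    rw [← div_eq_mul_inv, one_le_div hc_pos]
    exact hm.integral_mono_interval hc.1.le hc.2.le le_rfl

end BalancedStep

lemma integral_sq_mul_pow_three_le {a b : ℝ} (hab : a ≤ b) {p ρ : ℝ → ℝ}
    (hp : ∀ x ∈ Icc a b, 0 ≤ p x) (hρ : ∀ x ∈ Icc a b, 0 ≤ ρ x)
    (hρ_pos : 0 < ∫ x in a..b, ρ x) (hρ_int : IntervalIntegrable ρ volume a b)
    (hp2 : IntervalIntegrable (fun x ↦ p x ^ 2 * ρ x) volume a b)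
    (hp3 : IntervalIntegrable (fun x ↦ p x ^ 3 * ρ x) volume a b) :
    (∫ x in a..b, p x ^ 2 * ρ x) ^ 3 ≤
      (∫ x in a..b, p x ^ 3 * ρ x) ^ 2 * ∫ x in a..b, ρ x := by
  set Q := ∫ x in a..b, p x ^ 2 * ρ x
  set T := ∫ x in a..b, p x ^ 3 * ρ x
  set S := ∫ x in a..b, ρ x
  have hQ : 0 ≤ Q := intervalIntegral.integral_nonneg hab fun x hx ↦
    mul_nonneg (sq_nonneg _) (hρ x hx)
  obtain ⟨s, hs, hs_sq⟩ : ∃ s, 0 ≤ s ∧ s ^ 2 * S = Q :=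
    ⟨√(Q / S), Real.sqrt_nonneg _, by
      rw [Real.sq_sqrt (by positivity), div_mul_cancel₀ _ hρ_pos.ne']⟩
  have hYoung : 3 * s * Q ≤ 2 * T + s ^ 3 * S := by
    rw [← intervalIntegral.integral_const_mul, ← intervalIntegral.integral_const_mul,
      ← intervalIntegral.integral_const_mul,
      ← intervalIntegral.integral_add (hp3.const_mul _) (hρ_int.const_mul _)]
    refine intervalIntegral.integral_mono_on hab (hp2.const_mul _)
      ((hp3.const_mul _).add (hρ_int.const_mul _)) fun x hx ↦ ?_
    have hpx := hp x hx
    have hpoint : 0 ≤ (p x - s) ^ 2 * (2 * p x + s) * ρ x :=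
      mul_nonneg (by positivity) (hρ x hx)
    linear_combination hpoint
  have hsQ : s * Q ≤ T := by linear_combination hYoung / 2 + s * hs_sq / 2
  calc Q ^ 3 = (s * Q) ^ 2 * S := by linear_combination -Q ^ 2 * hs_sq
    _ ≤ T ^ 2 * S := by gcongr

lemma add_min_mul_le_of_pow_three_le {κ Γ Q E : ℝ} (hκ : 0 < κ) (hΓ : 0 < Γ) (hQ : 0 ≤ Q)
    (hE : 0 ≤ E) (h : κ ^ 2 * Q ^ 3 ≤ Γ * E ^ 2 * (E - κ * Q)) :
    (κ + min κ (4 * Γ)⁻¹) * Q ≤ E := by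
  rcases hQ.eq_or_lt with rfl | hQ
  · simpa using hE
  rcases le_total (2 * κ * Q) E with hlarge | hsmall
  · calc (κ + min κ (4 * Γ)⁻¹) * Q ≤ (κ + κ) * Q := by
          gcongr
          exact min_le_left _ _
      _ ≤ E := by linarith
  · have hdefect : 0 ≤ E - κ * Q := by
      by_contra! hneg
      have : 0 < κ ^ 2 * Q ^ 3 := by positivity
      have : Γ * E ^ 2 * (E - κ * Q) ≤ 0 := mul_nonpos_of_nonneg_of_nonpos (by positivity) hneg.le
      linarith
    have hcancel : Q ≤ 4 * Γ * (E - κ * Q) := by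
      refine le_of_mul_le_mul_left ?_ (show 0 < κ ^ 2 * Q ^ 2 by positivity)
      calc κ ^ 2 * Q ^ 2 * Q = κ ^ 2 * Q ^ 3 := by ring
        _ ≤ Γ * E ^ 2 * (E - κ * Q) := h
        _ ≤ Γ * (2 * κ * Q) ^ 2 * (E - κ * Q) := by gcongr
        _ = _ := by ring
    calc (κ + min κ (4 * Γ)⁻¹) * Q ≤ (κ + (4 * Γ)⁻¹) * Q := by
          gcongr
          exact min_le_right _ _
      _ = κ * Q + (4 * Γ)⁻¹ * Q := by ring
      _ ≤ κ * Q + (E - κ * Q) := by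
          gcongr
          rwa [inv_mul_le_iff₀ (by positivity)]
      _ = E := by ring

section Gap

variable {m w u : ℝ → ℝ} {c κ : ℝ}

lemma ae_sq_deriv_abs_flux_add (hm : IsWeight m) (hu : ContinuousOn u (Icc 0 1)) (t : ℝ) :
    ∀ᵐ x, x ∈ uIcc (0 : ℝ) 1 →
      deriv (fun y ↦ |flux m u y| + t * flux m (balancedStep m c) y) x ^ 2 / m x =
        u x ^ 2 * m x + 2 * t * (balancedStep m c x * deriv (fun y ↦ |flux m u y|) x) +
          t ^ 2 * (balancedStep m c x ^ 2 * m x) := by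
  have hum := hm.intervalIntegrable_mul hu
  have hstep := intervalIntegrable_balancedStep_mul (m := m) (c := c)
    hm.intervalIntegrable_zero_one
  have hflux := absolutelyContinuousOnInterval_flux hum
  filter_upwards [ae_deriv_flux hum, ae_deriv_flux hstep, ae_sq_deriv_abs hflux,
    (absolutelyContinuousOnInterval_abs hflux).ae_differentiableAt,
    (absolutelyContinuousOnInterval_flux hstep).ae_differentiableAt]
    with x hderiv hderiv_step habs habs_diff hstep_diff hx
  have hmx := (hm.pos x (uIcc_of_le (zero_le_one' ℝ) ▸ hx)).ne'
  have hsq := (habs hx).trans (congrArg (· ^ 2) (hderiv hx))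
  rw [deriv_fun_add (habs_diff hx) ((hstep_diff hx).const_mul t), deriv_const_mul_field,
    hderiv_step hx]
  field_simp
  linear_combination hsq

lemma integral_sq_deriv_abs_flux_add (hm : IsWeight m) (hc : c ∈ Ioo (0 : ℝ) 1)
    (hu : ContinuousOn u (Icc 0 1)) (huc : flux m u c = 0) (hu1 : flux m u 1 = 0) (t : ℝ) :
    IntervalIntegrable
      (fun x ↦ deriv (fun y ↦ |flux m u y| + t * flux m (balancedStep m c) y) x ^ 2 / m x)
      volume 0 1 ∧
    ∫ x in (0 : ℝ)..1,
        deriv (fun y ↦ |flux m u y| + t * flux m (balancedStep m c) y) x ^ 2 / m x =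
      (∫ x in (0 : ℝ)..1, u x ^ 2 * m x) +
        t ^ 2 * ((∫ x in (0 : ℝ)..c, m x)⁻¹ + (∫ x in c..1, m x)⁻¹) := by
  have hae := ae_sq_deriv_abs_flux_add (c := c) hm hu t
  have habs := absolutelyContinuousOnInterval_abs
    (absolutelyContinuousOnInterval_flux (hm.intervalIntegrable_mul hu))
  have hu2 := hm.intervalIntegrable_mul (hu.fun_pow 2)
  have hcross := (intervalIntegrable_balancedStep_mul (m := m) (c := c)
    habs.intervalIntegrable_deriv).const_mul (2 * t)
  have hstep2 : IntervalIntegrable (fun x ↦ t ^ 2 * (balancedStep m c x ^ 2 * m x)) volume 0 1 := by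
    simp only [sq (balancedStep m c _), mul_assoc]
    exact (intervalIntegrable_balancedStep_mul
      (intervalIntegrable_balancedStep_mul hm.intervalIntegrable_zero_one)).const_mul _
  constructor
  · refine ((hu2.add hcross).add hstep2).congr_ae ?_
    refine (ae_restrict_iff' measurableSet_uIoc).2 (hae.mono fun x hx hmem ↦ ?_)
    exact (hx (uIoc_subset_uIcc hmem)).symm
  · rw [intervalIntegral.integral_congr_ae
        (hae.mono fun x hx hmem ↦ hx (uIoc_subset_uIcc hmem)),
      intervalIntegral.integral_add (hu2.add hcross) hstep2,
      intervalIntegral.integral_add hu2 hcross, intervalIntegral.integral_const_mul,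
      intervalIntegral.integral_const_mul, integral_sq_balancedStep_mul hm hc,
      integral_balancedStep_mul_deriv habs (Ioo_subset_Icc_self hc) (by simp) (by simp [huc])
        (by simp [hu1])]
    ring

lemma IsWeight.integral_sq_div_add_le (hw : IsWeight w) {p q : ℝ → ℝ}
    (hp : ContinuousOn p (Icc 0 1)) (hq : ContinuousOn q (Icc 0 1)) (t : ℝ) :
    (∫ x in (0 : ℝ)..1, p x ^ 2 / w x) + 2 * t * (∫ x in (0 : ℝ)..1, p x * q x / w x) ≤
      ∫ x in (0 : ℝ)..1, (p x + t * q x) ^ 2 / w x := by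
  have hp2 := hw.inv.intervalIntegrable_mul (hp.fun_pow 2)
  have hpq := (hw.inv.intervalIntegrable_mul (hp.fun_mul hq)).const_mul (2 * t)
  simp only [div_eq_mul_inv]
  rw [← intervalIntegral.integral_const_mul, ← intervalIntegral.integral_add hp2 hpq]
  refine intervalIntegral.integral_mono_on zero_le_one (hp2.add hpq)
    (hw.inv.intervalIntegrable_mul ((hp.fun_add (hq.const_mul t)).fun_pow 2)) fun x hx ↦ ?_
  have hdrop : 0 ≤ (t * q x) ^ 2 * (w x)⁻¹ := mul_nonneg (sq_nonneg _) (hw.inv.pos x hx).le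
  linear_combination hdrop

/-- The perturbation `|flux m u| + t φ` by the tent `φ` raises the energy only to second order in
`t`, because `flux m u` vanishes where `balancedStep m c` jumps. -/
lemma PoincareBound.mul_add_integral_abs_flux_mul_le (hκ : 0 ≤ κ) (hm : IsWeight m)
    (hw : IsWeight w) (h : PoincareBound m w κ) (hc : c ∈ Ioo (0 : ℝ) 1)
    (hu : ContinuousOn u (Icc 0 1)) (huc : flux m u c = 0) (hu1 : flux m u 1 = 0) (t : ℝ) :
    κ * ((∫ x in (0 : ℝ)..1, flux m u x ^ 2 / w x) +
        2 * t * ∫ x in (0 : ℝ)..1, |flux m u x| * flux m (balancedStep m c) x / w x) ≤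
      (∫ x in (0 : ℝ)..1, u x ^ 2 * m x) +
        t ^ 2 * ((∫ x in (0 : ℝ)..c, m x)⁻¹ + (∫ x in c..1, m x)⁻¹) := by
  have hum := hm.intervalIntegrable_mul hu
  have hstep := intervalIntegrable_balancedStep_mul (m := m) (c := c)
    hm.intervalIntegrable_zero_one
  obtain ⟨hint, henergy⟩ := integral_sq_deriv_abs_flux_add hm hc hu huc hu1 t
  have hexpand := hw.integral_sq_div_add_le (continuousOn_flux hum).abs (continuousOn_flux hstep) t
  simp only [sq_abs] at hexpand
  rw [← henergy]
  refine (mul_le_mul_of_nonneg_left hexpand hκ).trans (h.mul_integral_sq_div_le hκ hm hw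
    ((absolutelyContinuousOnInterval_abs (absolutelyContinuousOnInterval_flux hum)).fun_add
      ((absolutelyContinuousOnInterval_flux hstep).const_mul t)) ?_ ?_ hint)
  · simp only [flux_zero, abs_zero, mul_zero, add_zero]
  · simp only [hu1, flux_balancedStep_one hm hc, abs_zero, mul_zero, add_zero]

lemma PoincareBound.sq_mul_integral_abs_flux_mul_le (hκ : 0 ≤ κ) (hm : IsWeight m)
    (hw : IsWeight w) (h : PoincareBound m w κ) (hc : c ∈ Ioo (0 : ℝ) 1)
    (hu : ContinuousOn u (Icc 0 1)) (huc : flux m u c = 0) (hu1 : flux m u 1 = 0) :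
    (κ * ∫ x in (0 : ℝ)..1, |flux m u x| * flux m (balancedStep m c) x / w x) ^ 2 ≤
      ((∫ x in (0 : ℝ)..1, u x ^ 2 * m x) - κ * ∫ x in (0 : ℝ)..1, flux m u x ^ 2 / w x) *
        ((∫ x in (0 : ℝ)..c, m x)⁻¹ + (∫ x in c..1, m x)⁻¹) := by
  have hdiscrim := discrim_le_zero
    (a := (∫ x in (0 : ℝ)..c, m x)⁻¹ + (∫ x in c..1, m x)⁻¹)
    (b := -(2 * κ * ∫ x in (0 : ℝ)..1, |flux m u x| * flux m (balancedStep m c) x / w x))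
    (c := (∫ x in (0 : ℝ)..1, u x ^ 2 * m x) - κ * ∫ x in (0 : ℝ)..1, flux m u x ^ 2 / w x)
    fun t ↦ by
      linear_combination h.mul_add_integral_abs_flux_mul_le hκ hm hw hc hu huc hu1 t
  rw [discrim] at hdiscrim
  linear_combination hdiscrim / 4

lemma integral_abs_flux_pow_three_le (hm : IsWeight m) (hw : IsWeight w)
    (hc : c ∈ Ioo (0 : ℝ) 1) (hu : ContinuousOn u (Icc 0 1)) (hu1 : flux m u 1 = 0) :
    ∫ x in (0 : ℝ)..1, |flux m u x| ^ 3 * (w x)⁻¹ ≤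
      (∫ x in (0 : ℝ)..1, u x ^ 2 * m x) * (∫ x in (0 : ℝ)..1, m x) *
        ∫ x in (0 : ℝ)..1, |flux m u x| * flux m (balancedStep m c) x / w x := by
  have hF := continuousOn_flux (hm.intervalIntegrable_mul hu)
  have hφ := continuousOn_flux (intervalIntegrable_balancedStep_mul (m := m) (c := c)
    hm.intervalIntegrable_zero_one)
  rw [← intervalIntegral.integral_const_mul]
  refine intervalIntegral.integral_mono_on zero_le_one
    (hw.inv.intervalIntegrable_mul (hF.abs.fun_pow 3))
    ((hw.inv.intervalIntegrable_mul (hF.abs.fun_mul hφ)).const_mul _) fun x hx ↦ ?_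
  have hwx := hw.inv.pos x hx
  calc |flux m u x| ^ 3 * (w x)⁻¹ = flux m u x ^ 2 * (|flux m u x| * (w x)⁻¹) := by
        rw [← sq_abs (flux m u x)]
        ring
    _ ≤ _ := mul_le_mul_of_nonneg_right (sq_flux_le_flux_balancedStep hm hc hu hu1 hx)
        (by positivity)
    _ = _ := by ring

lemma PoincareBound.sq_mul_integral_sq_flux_pow_three_le (hκ : 0 ≤ κ) (hm : IsWeight m)
    (hw : IsWeight w) (h : PoincareBound m w κ) (hc : c ∈ Ioo (0 : ℝ) 1)
    (hu : ContinuousOn u (Icc 0 1)) (huc : flux m u c = 0) (hu1 : flux m u 1 = 0) :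
    κ ^ 2 * (∫ x in (0 : ℝ)..1, flux m u x ^ 2 / w x) ^ 3 ≤
      (∫ x in (0 : ℝ)..1, m x) ^ 2 * (∫ x in (0 : ℝ)..1, (w x)⁻¹) *
        ((∫ x in (0 : ℝ)..c, m x)⁻¹ + (∫ x in c..1, m x)⁻¹) *
          (∫ x in (0 : ℝ)..1, u x ^ 2 * m x) ^ 2 *
            ((∫ x in (0 : ℝ)..1, u x ^ 2 * m x) -
              κ * ∫ x in (0 : ℝ)..1, flux m u x ^ 2 / w x) := by
  have hF := (continuousOn_flux (hm.intervalIntegrable_mul hu)).abs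
  have hS := hw.inv.integral_pos le_rfl one_pos le_rfl
  have hHolder := integral_sq_mul_pow_three_le zero_le_one (fun x _ ↦ abs_nonneg (flux m u x))
    (fun x hx ↦ (hw.inv.pos x hx).le) hS
    hw.inv.intervalIntegrable_zero_one (hw.inv.intervalIntegrable_mul (hF.fun_pow 2))
    (hw.inv.intervalIntegrable_mul (hF.fun_pow 3))
  simp only [sq_abs, ← div_eq_mul_inv (flux m u _ ^ 2)] at hHolder
  have hT : 0 ≤ ∫ x in (0 : ℝ)..1, |flux m u x| ^ 3 * (w x)⁻¹ :=
    intervalIntegral.integral_nonneg zero_le_one fun x hx ↦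
      mul_nonneg (by positivity) (hw.inv.pos x hx).le
  have hcube := integral_abs_flux_pow_three_le hm hw hc hu hu1
  have hdefect := h.sq_mul_integral_abs_flux_mul_le hκ hm hw hc hu huc hu1
  calc κ ^ 2 * (∫ x in (0 : ℝ)..1, flux m u x ^ 2 / w x) ^ 3
      ≤ κ ^ 2 * (((∫ x in (0 : ℝ)..1, u x ^ 2 * m x) * (∫ x in (0 : ℝ)..1, m x) *
        ∫ x in (0 : ℝ)..1, |flux m u x| * flux m (balancedStep m c) x / w x) ^ 2 *
          ∫ x in (0 : ℝ)..1, (w x)⁻¹) := by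
        gcongr
        exact hHolder.trans (by gcongr)
    _ = ((∫ x in (0 : ℝ)..1, u x ^ 2 * m x) * ∫ x in (0 : ℝ)..1, m x) ^ 2 *
        (∫ x in (0 : ℝ)..1, (w x)⁻¹) *
          (κ * ∫ x in (0 : ℝ)..1, |flux m u x| * flux m (balancedStep m c) x / w x) ^ 2 := by
        ring
    _ ≤ _ := mul_le_mul_of_nonneg_left hdefect (by positivity)
    _ = _ := by ring

/-- The gain over the Poincaré constant `κ` for functions with mean zero on both sides of `c`. -/
noncomputable def splitGain (m w : ℝ → ℝ) (c κ : ℝ) : ℝ :=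
  min κ (4 * ((∫ x in (0 : ℝ)..1, m x) ^ 2 * (∫ x in (0 : ℝ)..1, (w x)⁻¹) *
    ((∫ x in (0 : ℝ)..c, m x)⁻¹ + (∫ x in c..1, m x)⁻¹)))⁻¹

lemma PoincareBound.add_splitGain_mul_integral_sq_le {u' : ℝ → ℝ} (hκ : 0 < κ)
    (hm : IsWeight m) (hw : IsWeight w) (h : PoincareBound m w κ) (hc : c ∈ Ioo (0 : ℝ) 1)
    (hu : MemV0 m u u') (huc : flux m u c = 0) :
    (κ + splitGain m w c κ) * ∫ x in (0 : ℝ)..1, u x ^ 2 * m x ≤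
      ∫ x in (0 : ℝ)..1, u' x ^ 2 * w x := by
  have hM := hm.integral_pos le_rfl one_pos le_rfl
  have hS := hw.inv.integral_pos le_rfl one_pos le_rfl
  have hM₁ := hm.integral_pos le_rfl hc.1 hc.2.le
  have hM₂ := hm.integral_pos hc.1.le hc.2 le_rfl
  refine hu.mul_integral_sq_le hm hw (by rw [splitGain]; positivity) ?_
  exact add_min_mul_le_of_pow_three_le hκ (by positivity) (hw.integral_sq_div_nonneg _)
    (hm.integral_sq_mul_nonneg u)
    (h.sq_mul_integral_sq_flux_pow_three_le hκ.le hm hw hc hu.1.continuousOn huc hu.2)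

end Gap

section Eigenvalues

variable {σ μ u u' u₁ u₁' u₂ u₂' : ℝ → ℝ}

lemma IsWeight.sq_mul (hσ : IsWeight σ) (hμ : IsWeight μ) : IsWeight fun x ↦ σ x ^ 2 * μ x where
  continuousOn := (hσ.continuousOn.fun_pow 2).mul hμ.continuousOn
  pos x hx := mul_pos (pow_pos (hσ.pos x hx) 2) (hμ.pos x hx)

lemma rayleigh_eq_div : Rayleigh σ μ u u' =
    (∫ x in (0 : ℝ)..1, u' x ^ 2 * (σ x ^ 2 * μ x)) / ∫ x in (0 : ℝ)..1, u x ^ 2 * μ x := by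
  simp only [Rayleigh, mul_assoc]

lemma rayleigh_nonneg (hσ : IsWeight σ) (hμ : IsWeight μ) : 0 ≤ Rayleigh σ μ u u' := by
  rw [rayleigh_eq_div]
  exact div_nonneg ((hσ.sq_mul hμ).integral_sq_mul_nonneg u') (hμ.integral_sq_mul_nonneg u)

lemma le_rayleigh_iff (hμ : IsWeight μ) (hu : ContinuousOn u (Icc 0 1)) (hu_ne : NotZeroOn01 u)
    {r : ℝ} : r ≤ Rayleigh σ μ u u' ↔ r * ∫ x in (0 : ℝ)..1, u x ^ 2 * μ x ≤
      ∫ x in (0 : ℝ)..1, u' x ^ 2 * (σ x ^ 2 * μ x) := by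
  rw [rayleigh_eq_div, le_div_iff₀ (hμ.integral_sq_mul_pos hu hu_ne)]

lemma two_mul_lam1 : 2 * lam1 σ μ = sInf {r : ℝ | ∃ u u' : ℝ → ℝ,
    MemV0 μ u u' ∧ NotZeroOn01 u ∧ r = Rayleigh σ μ u u'} := by
  rw [lam1]
  ring

lemma poincareBound_two_mul_lam1 (hσ : IsWeight σ) (hμ : IsWeight μ) :
    PoincareBound μ (fun x ↦ σ x ^ 2 * μ x) (2 * lam1 σ μ) := by
  intro u u' hu
  by_cases hu_ne : NotZeroOn01 u
  · rw [← le_rayleigh_iff hμ hu.1.continuousOn hu_ne, two_mul_lam1]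
    refine csInf_le ⟨0, ?_⟩ ⟨u, u', hu, hu_ne, rfl⟩
    rintro _ ⟨v, v', -, -, rfl⟩
    exact rayleigh_nonneg hσ hμ
  · have hu_zero : ∀ x ∈ Icc (0 : ℝ) 1, u x = 0 := by
      simpa only [NotZeroOn01, not_exists, not_and, not_not] using hu_ne
    have hnorm : ∫ x in (0 : ℝ)..1, u x ^ 2 * μ x = 0 := by
      refine (intervalIntegral.integral_congr fun x hx ↦ ?_).trans intervalIntegral.integral_zero
      simp only [hu_zero x (uIcc_of_le (zero_le_one' ℝ) ▸ hx)]
      ring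
    rw [hnorm, mul_zero]
    exact (hσ.sq_mul hμ).integral_sq_mul_nonneg _

/-- `u₁` and `u₂`, with derivatives `u₁'` and `u₂'`, are a basis of a plane in `V₀`. -/
structure SpansPlane (μ u₁ u₁' u₂ u₂' : ℝ → ℝ) : Prop where
  left : MemV0 μ u₁ u₁'
  right : MemV0 μ u₂ u₂'
  indep : ∀ a b : ℝ, (∀ x ∈ Icc (0 : ℝ) 1, a * u₁ x + b * u₂ x = 0) → a = 0 ∧ b = 0

/-- The Rayleigh quotients of the nonzero elements of the span of `u₁` and `u₂`; the second
variational eigenvalue minimizes the supremum of this set. -/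
def planeRayleigh (σ μ u₁ u₁' u₂ u₂' : ℝ → ℝ) : Set ℝ :=
  {s | ∃ a b : ℝ, NotZeroOn01 (fun x ↦ a * u₁ x + b * u₂ x) ∧
    s = Rayleigh σ μ (fun x ↦ a * u₁ x + b * u₂ x) fun x ↦ a * u₁' x + b * u₂' x}

lemma two_mul_lam2 : 2 * lam2 σ μ = sInf {r : ℝ | ∃ u₁ u₁' u₂ u₂' : ℝ → ℝ,
    SpansPlane μ u₁ u₁' u₂ u₂' ∧ r = sSup (planeRayleigh σ μ u₁ u₁' u₂ u₂')} := by
  rw [lam2, ← mul_assoc, mul_one_div_cancel two_ne_zero, one_mul]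
  congr with r
  constructor
  · rintro ⟨u₁, u₁', u₂, u₂', hu₁, hu₂, hindep, rfl⟩
    exact ⟨u₁, u₁', u₂, u₂', ⟨hu₁, hu₂, hindep⟩, rfl⟩
  · rintro ⟨u₁, u₁', u₂, u₂', h, rfl⟩
    exact ⟨u₁, u₁', u₂, u₂', h.left, h.right, h.indep, rfl⟩

lemma SpansPlane.memV0 (hμ : IsWeight μ) (h : SpansPlane μ u₁ u₁' u₂ u₂') (a b : ℝ) :
    MemV0 μ (fun x ↦ a * u₁ x + b * u₂ x) fun x ↦ a * u₁' x + b * u₂' x :=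
  h.left.linearCombination hμ h.right a b

lemma SpansPlane.notZeroOn01 (h : SpansPlane μ u₁ u₁' u₂ u₂') {a b : ℝ}
    (hab : ¬(a = 0 ∧ b = 0)) : NotZeroOn01 fun x ↦ a * u₁ x + b * u₂ x := by
  contrapose! hab
  simp only [NotZeroOn01, not_exists, not_and, not_not] at hab
  exact h.indep a b hab

lemma exists_pos_mul_le_of_quadratic_pos {p q r : ℝ}
    (h : ∀ a b : ℝ, ¬(a = 0 ∧ b = 0) → 0 < a ^ 2 * p + 2 * a * b * q + b ^ 2 * r) :
    ∃ δ > 0, ∀ a b : ℝ, δ * (a ^ 2 + b ^ 2) ≤ a ^ 2 * p + 2 * a * b * q + b ^ 2 * r := by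
  have hp : 0 < p := by simpa using h 1 0 (by simp)
  have hr : 0 < r := by simpa using h 0 1 (by simp)
  have hdet : 0 < p * r - q ^ 2 := by
    refine pos_of_mul_pos_right ?_ hr.le
    linear_combination h r (-q) (by simp [hr.ne'])
  refine ⟨(p * r - q ^ 2) / (p + r), by positivity, fun a b ↦ ?_⟩
  rw [div_mul_eq_mul_div, div_le_iff₀ (by positivity)]
  linear_combination sq_nonneg (p * a + q * b) + sq_nonneg (q * a + r * b)

lemma integral_sq_linearCombination_mul (hμ : IsWeight μ) (hu₁ : ContinuousOn u₁ (Icc 0 1))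
    (hu₂ : ContinuousOn u₂ (Icc 0 1)) (a b : ℝ) :
    ∫ x in (0 : ℝ)..1, (a * u₁ x + b * u₂ x) ^ 2 * μ x =
      a ^ 2 * (∫ x in (0 : ℝ)..1, u₁ x ^ 2 * μ x) +
        2 * a * b * (∫ x in (0 : ℝ)..1, u₁ x * u₂ x * μ x) +
          b ^ 2 * ∫ x in (0 : ℝ)..1, u₂ x ^ 2 * μ x := by
  have h₁₁ := (hμ.intervalIntegrable_mul (hu₁.fun_pow 2)).const_mul (a ^ 2)
  have h₁₂ := (hμ.intervalIntegrable_mul (hu₁.fun_mul hu₂)).const_mul (2 * a * b)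
  have h₂₂ := (hμ.intervalIntegrable_mul (hu₂.fun_pow 2)).const_mul (b ^ 2)
  rw [← intervalIntegral.integral_const_mul, ← intervalIntegral.integral_const_mul,
    ← intervalIntegral.integral_const_mul, ← intervalIntegral.integral_add h₁₁ h₁₂,
    ← intervalIntegral.integral_add (h₁₁.add h₁₂) h₂₂]
  congr with x
  ring

lemma SpansPlane.exists_pos_mul_le (hμ : IsWeight μ) (h : SpansPlane μ u₁ u₁' u₂ u₂') :
    ∃ δ > 0, ∀ a b : ℝ,
      δ * (a ^ 2 + b ^ 2) ≤ ∫ x in (0 : ℝ)..1, (a * u₁ x + b * u₂ x) ^ 2 * μ x := by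
  simp only [integral_sq_linearCombination_mul hμ h.left.1.continuousOn h.right.1.continuousOn]
  refine exists_pos_mul_le_of_quadratic_pos fun a b hab ↦ ?_
  rw [← integral_sq_linearCombination_mul hμ h.left.1.continuousOn h.right.1.continuousOn]
  exact hμ.integral_sq_mul_pos (h.memV0 hμ a b).1.continuousOn (h.notZeroOn01 hab)

lemma rayleigh_linearCombination_le (hσ : IsWeight σ) (hμ : IsWeight μ)
    (hu₁' : ContinuousOn u₁' (Icc 0 1)) (hu₂' : ContinuousOn u₂' (Icc 0 1)) {δ a b : ℝ}
    (hδ : 0 < δ)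
    (hab : δ * (a ^ 2 + b ^ 2) ≤ ∫ x in (0 : ℝ)..1, (a * u₁ x + b * u₂ x) ^ 2 * μ x) :
    Rayleigh σ μ (fun x ↦ a * u₁ x + b * u₂ x) (fun x ↦ a * u₁' x + b * u₂' x) ≤
      (∫ x in (0 : ℝ)..1, (u₁' x ^ 2 + u₂' x ^ 2) * (σ x ^ 2 * μ x)) / δ := by
  have hw := hσ.sq_mul hμ
  have hK : 0 ≤ ∫ x in (0 : ℝ)..1, (u₁' x ^ 2 + u₂' x ^ 2) * (σ x ^ 2 * μ x) :=
    intervalIntegral.integral_nonneg zero_le_one fun x hx ↦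
      mul_nonneg (by positivity) (hw.pos x hx).le
  have henergy : ∫ x in (0 : ℝ)..1, (a * u₁' x + b * u₂' x) ^ 2 * (σ x ^ 2 * μ x) ≤
      (a ^ 2 + b ^ 2) * ∫ x in (0 : ℝ)..1, (u₁' x ^ 2 + u₂' x ^ 2) * (σ x ^ 2 * μ x) := by
    rw [← intervalIntegral.integral_const_mul]
    refine intervalIntegral.integral_mono_on zero_le_one
      (hw.intervalIntegrable_mul (((hu₁'.const_mul a).fun_add (hu₂'.const_mul b)).fun_pow 2))
      ((hw.intervalIntegrable_mul ((hu₁'.fun_pow 2).fun_add (hu₂'.fun_pow 2))).const_mul _)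
      fun x hx ↦ ?_
    rw [← mul_assoc (a ^ 2 + b ^ 2)]
    refine mul_le_mul_of_nonneg_right ?_ (hw.pos x hx).le
    linear_combination sq_nonneg (a * u₂' x - b * u₁' x)
  rw [rayleigh_eq_div]
  refine div_le_of_le_mul₀ (hμ.integral_sq_mul_nonneg _) (by positivity) (henergy.trans ?_)
  rw [div_mul_eq_mul_div, le_div_iff₀ hδ]
  linear_combination mul_le_mul_of_nonneg_left hab hK

lemma SpansPlane.bddAbove_planeRayleigh (hσ : IsWeight σ) (hμ : IsWeight μ)
    (h : SpansPlane μ u₁ u₁' u₂ u₂') : BddAbove (planeRayleigh σ μ u₁ u₁' u₂ u₂') := by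
  obtain ⟨δ, hδ, hcoercive⟩ := h.exists_pos_mul_le hμ
  refine ⟨(∫ x in (0 : ℝ)..1, (u₁' x ^ 2 + u₂' x ^ 2) * (σ x ^ 2 * μ x)) / δ, ?_⟩
  rintro _ ⟨a, b, -, rfl⟩
  exact rayleigh_linearCombination_le hσ hμ h.left.1.2 h.right.1.2 hδ (hcoercive a b)

lemma SpansPlane.exists_flux_eq_zero (hμ : IsWeight μ) (h : SpansPlane μ u₁ u₁' u₂ u₂') {c : ℝ}
    (hc : c ∈ Icc (0 : ℝ) 1) :
    ∃ a b : ℝ, ¬(a = 0 ∧ b = 0) ∧ flux μ (fun x ↦ a * u₁ x + b * u₂ x) c = 0 := by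
  have hsub : uIcc 0 c ⊆ uIcc (0 : ℝ) 1 :=
    uIcc_subset_uIcc_left (uIcc_of_le (zero_le_one' ℝ) ▸ hc)
  have hlin (a b : ℝ) : flux μ (fun x ↦ a * u₁ x + b * u₂ x) c =
      a * flux μ u₁ c + b * flux μ u₂ c := by
    have h₁ := ((hμ.intervalIntegrable_mul h.left.1.continuousOn).mono_set hsub).const_mul a
    have h₂ := ((hμ.intervalIntegrable_mul h.right.1.continuousOn).mono_set hsub).const_mul b
    simp only [flux, add_mul, mul_assoc]
    rw [intervalIntegral.integral_add h₁ h₂, intervalIntegral.integral_const_mul,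
      intervalIntegral.integral_const_mul]
  by_cases hzero : flux μ u₁ c = 0 ∧ flux μ u₂ c = 0
  · exact ⟨1, 0, by simp, by simp [hzero.1]⟩
  · refine ⟨flux μ u₂ c, -flux μ u₁ c, fun hab ↦ hzero ⟨neg_eq_zero.1 hab.2, hab.1⟩, ?_⟩
    rw [hlin]
    ring

lemma SpansPlane.two_mul_lam1_add_splitGain_le_sSup (hσ : IsWeight σ) (hμ : IsWeight μ)
    (hlam : 0 < lam1 σ μ) {c : ℝ} (hc : c ∈ Ioo (0 : ℝ) 1) (h : SpansPlane μ u₁ u₁' u₂ u₂') :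
    2 * lam1 σ μ + splitGain μ (fun x ↦ σ x ^ 2 * μ x) c (2 * lam1 σ μ) ≤
      sSup (planeRayleigh σ μ u₁ u₁' u₂ u₂') := by
  obtain ⟨a, b, hab, hflux⟩ := h.exists_flux_eq_zero hμ (Ioo_subset_Icc_self hc)
  have hmem := h.memV0 hμ a b
  have hne := h.notZeroOn01 hab
  refine le_csSup_of_le (h.bddAbove_planeRayleigh hσ hμ) ⟨a, b, hne, rfl⟩ ?_
  rw [le_rayleigh_iff hμ hmem.1.continuousOn hne]
  exact (poincareBound_two_mul_lam1 hσ hμ).add_splitGain_mul_integral_sq_le (by positivity) hμ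
    (hσ.sq_mul hμ) hc hmem hflux

lemma integral_sq_quadratic (a b c : ℝ) :
    ∫ x in (0 : ℝ)..1, (a * x + b * (x ^ 2 - x) - c) ^ 2 =
      a ^ 2 / 12 + b ^ 2 / 180 + (a / 2 - b / 6 - c) ^ 2 := by
  have hprimitive (x : ℝ) : HasDerivAt
      (fun x : ℝ ↦ b ^ 2 / 5 * x ^ 5 + b * (a - b) / 2 * x ^ 4 +
        ((a - b) ^ 2 - 2 * b * c) / 3 * x ^ 3 - (a - b) * c * x ^ 2 + c ^ 2 * x)
      ((a * x + b * (x ^ 2 - x) - c) ^ 2) x := by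
    refine HasDerivAt.congr_deriv (((((hasDerivAt_pow 5 x).const_mul (b ^ 2 / 5)).add
      ((hasDerivAt_pow 4 x).const_mul (b * (a - b) / 2))).add
      ((hasDerivAt_pow 3 x).const_mul (((a - b) ^ 2 - 2 * b * c) / 3))).sub
      ((hasDerivAt_pow 2 x).const_mul ((a - b) * c)) |>.add
      ((hasDerivAt_id x).const_mul (c ^ 2))) ?_
    push_cast
    ring
  rw [intervalIntegral.integral_eq_sub_of_hasDerivAt (fun x _ ↦ hprimitive x)
    (Continuous.intervalIntegrable (by fun_prop) _ _)]
  ring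

lemma spansPlane_centered_quadratic (hμ : IsWeight μ) :
    SpansPlane μ (centered μ fun x ↦ x) (fun _ ↦ 1) (centered μ fun x ↦ x ^ 2 - x)
      fun x ↦ 2 * x - 1 where
  left := IsC1On01.memV0_centered hμ ⟨fun x _ ↦ hasDerivAt_id x, continuousOn_const⟩
  right := IsC1On01.memV0_centered hμ
    ⟨fun x _ ↦ by simpa using (hasDerivAt_pow 2 x).fun_sub (hasDerivAt_id' x), by fun_prop⟩
  indep a b h := by
    have h₀ := h 0 (by simp)
    have h₁ := h 1 (by simp)
    have h₂ := h (1 / 2) (by constructor <;> norm_num)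
    simp only [centered] at h₀ h₁ h₂
    have ha : a = 0 := by linear_combination h₁ - h₀
    have hb : b = 0 := by linear_combination 2 * h₀ + 2 * h₁ - 4 * h₂
    exact ⟨ha, hb⟩

lemma div_le_integral_sq_centered_quadratic (μ : ℝ → ℝ) (a b : ℝ) :
    (a ^ 2 + b ^ 2) / 180 ≤ ∫ x in (0 : ℝ)..1,
      (a * centered μ (fun x ↦ x) x + b * centered μ (fun x ↦ x ^ 2 - x) x) ^ 2 := by
  set c₁ := (∫ t in (0 : ℝ)..1, t * μ t) / ∫ t in (0 : ℝ)..1, μ t with hc₁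
  set c₂ := (∫ t in (0 : ℝ)..1, (t ^ 2 - t) * μ t) / ∫ t in (0 : ℝ)..1, μ t with hc₂
  have hshift : ∫ x in (0 : ℝ)..1,
      (a * centered μ (fun x ↦ x) x + b * centered μ (fun x ↦ x ^ 2 - x) x) ^ 2 =
      ∫ x in (0 : ℝ)..1, (a * x + b * (x ^ 2 - x) - (a * c₁ + b * c₂)) ^ 2 := by
    congr with x
    simp only [centered, ← hc₁, ← hc₂]
    ring
  rw [hshift, integral_sq_quadratic]
  linarith [sq_nonneg a, sq_nonneg (a / 2 - b / 6 - (a * c₁ + b * c₂))]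

lemma mul_le_integral_sq_centered_quadratic_mul (hμ : IsWeight μ) {d : ℝ} (hd : 0 ≤ d)
    (hμd : ∀ x ∈ Icc (0 : ℝ) 1, d ≤ μ x) (a b : ℝ) :
    d / 180 * (a ^ 2 + b ^ 2) ≤ ∫ x in (0 : ℝ)..1,
      (a * centered μ (fun x ↦ x) x + b * centered μ (fun x ↦ x ^ 2 - x) x) ^ 2 * μ x := by
  have hplane := ((spansPlane_centered_quadratic hμ).memV0 hμ a b).1.continuousOn.fun_pow 2
  calc d / 180 * (a ^ 2 + b ^ 2) = d * ((a ^ 2 + b ^ 2) / 180) := by ring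
    _ ≤ d * ∫ x in (0 : ℝ)..1,
          (a * centered μ (fun x ↦ x) x + b * centered μ (fun x ↦ x ^ 2 - x) x) ^ 2 := by
        gcongr
        exact div_le_integral_sq_centered_quadratic μ a b
    _ ≤ _ := by
        rw [← intervalIntegral.integral_const_mul]
        refine intervalIntegral.integral_mono_on zero_le_one
          ((hplane.intervalIntegrable_of_Icc zero_le_one).const_mul d)
          (hμ.intervalIntegrable_mul hplane) fun x hx ↦ ?_
        rw [mul_comm]
        exact mul_le_mul_of_nonneg_left (hμd x hx) (sq_nonneg _)

lemma le_two_mul_lam1_of_poincareBound (hμ : IsWeight μ) {κ : ℝ}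
    (h : PoincareBound μ (fun x ↦ σ x ^ 2 * μ x) κ) : κ ≤ 2 * lam1 σ μ := by
  have hplane := spansPlane_centered_quadratic hμ
  rw [two_mul_lam1]
  refine le_csInf ⟨_, _, _, hplane.memV0 hμ 1 0, hplane.notZeroOn01 (by simp), rfl⟩ ?_
  rintro _ ⟨u, u', hu, hu_ne, rfl⟩
  exact (le_rayleigh_iff hμ hu.1.continuousOn hu_ne).2 (h u u' hu)

lemma two_mul_lam1_add_splitGain_le_two_mul_lam2 (hσ : IsWeight σ) (hμ : IsWeight μ)
    (hlam : 0 < lam1 σ μ) {c : ℝ} (hc : c ∈ Ioo (0 : ℝ) 1) :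
    2 * lam1 σ μ + splitGain μ (fun x ↦ σ x ^ 2 * μ x) c (2 * lam1 σ μ) ≤ 2 * lam2 σ μ := by
  rw [two_mul_lam2]
  refine le_csInf ⟨_, _, _, _, _, spansPlane_centered_quadratic hμ, rfl⟩ ?_
  rintro _ ⟨u₁, u₁', u₂, u₂', h, rfl⟩
  exact h.two_mul_lam1_add_splitGain_le_sSup hσ hμ hlam hc

lemma SpansPlane.two_mul_lam2_le (hσ : IsWeight σ) (hμ : IsWeight μ)
    (h : SpansPlane μ u₁ u₁' u₂ u₂') :
    2 * lam2 σ μ ≤ sSup (planeRayleigh σ μ u₁ u₁' u₂ u₂') := by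
  rw [two_mul_lam2]
  refine csInf_le ⟨0, ?_⟩ ⟨u₁, u₁', u₂, u₂', h, rfl⟩
  rintro _ ⟨v₁, v₁', v₂, v₂', -, rfl⟩
  refine Real.sSup_nonneg ?_
  rintro _ ⟨a, b, -, rfl⟩
  exact rayleigh_nonneg hσ hμ

lemma lam2_le_mul_integral_div (hσ : IsWeight σ) (hμ : IsWeight μ) {d : ℝ} (hd : 0 < d)
    (hμd : ∀ x ∈ Icc (0 : ℝ) 1, d ≤ μ x) :
    lam2 σ μ ≤ 180 * (∫ x in (0 : ℝ)..1, σ x ^ 2 * μ x) / d := by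
  have hw := hσ.sq_mul hμ
  have hW := hw.integral_nonneg le_rfl zero_le_one le_rfl
  have hplane := spansPlane_centered_quadratic hμ
  have henergy : ∫ x in (0 : ℝ)..1, (1 ^ 2 + (2 * x - 1) ^ 2) * (σ x ^ 2 * μ x) ≤
      2 * ∫ x in (0 : ℝ)..1, σ x ^ 2 * μ x := by
    rw [← intervalIntegral.integral_const_mul]
    refine intervalIntegral.integral_mono_on zero_le_one
      (hw.intervalIntegrable_mul (by fun_prop)) (hw.intervalIntegrable_zero_one.const_mul 2)
      fun x hx ↦ mul_le_mul_of_nonneg_right ?_ (hw.pos x hx).le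
    linear_combination 4 * mul_nonneg hx.1 (sub_nonneg.2 hx.2)
  have hsup : sSup (planeRayleigh σ μ (centered μ fun x ↦ x) (fun _ ↦ 1)
      (centered μ fun x ↦ x ^ 2 - x) fun x ↦ 2 * x - 1) ≤
      2 * (∫ x in (0 : ℝ)..1, σ x ^ 2 * μ x) / (d / 180) := by
    refine Real.sSup_le ?_ (by positivity)
    rintro _ ⟨a, b, -, rfl⟩
    refine (rayleigh_linearCombination_le hσ hμ hplane.left.1.2 hplane.right.1.2 (by positivity)
      (mul_le_integral_sq_centered_quadratic_mul hμ hd.le hμd a b)).trans ?_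
    gcongr
  have hlam2 := (hplane.two_mul_lam2_le hσ hμ).trans hsup
  calc lam2 σ μ ≤ 2 * (∫ x in (0 : ℝ)..1, σ x ^ 2 * μ x) / (d / 180) / 2 := by linarith
    _ = 180 * (∫ x in (0 : ℝ)..1, σ x ^ 2 * μ x) / d := by field_simp

end Eigenvalues

section UniformBounds

variable {σ μ : ℝ → ℝ} {d D : ℝ}

lemma intervalIntegral_le_mul_sub {f : ℝ → ℝ} {a b K : ℝ} (hab : a ≤ b)
    (hf : IntervalIntegrable f volume a b) (hfK : ∀ x ∈ Icc a b, f x ≤ K) :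
    ∫ x in a..b, f x ≤ K * (b - a) := by
  calc ∫ x in a..b, f x ≤ ∫ _ in a..b, K :=
        intervalIntegral.integral_mono_on hab hf intervalIntegrable_const hfK
    _ = K * (b - a) := by rw [intervalIntegral.integral_const, smul_eq_mul, mul_comm]

lemma mul_sub_le_intervalIntegral {f : ℝ → ℝ} {a b k : ℝ} (hab : a ≤ b)
    (hf : IntervalIntegrable f volume a b) (hkf : ∀ x ∈ Icc a b, k ≤ f x) :
    k * (b - a) ≤ ∫ x in a..b, f x := by
  calc k * (b - a) = ∫ _ in a..b, k := by
        rw [intervalIntegral.integral_const, smul_eq_mul, mul_comm]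
    _ ≤ ∫ x in a..b, f x :=
        intervalIntegral.integral_mono_on hab intervalIntegrable_const hf hkf

lemma integral_inv_sq_mul_le (hd : 0 < d) (hσ : IsWeight σ) (hμ : IsWeight μ)
    (hσd : ∀ x ∈ Icc (0 : ℝ) 1, d ≤ σ x) (hμd : ∀ x ∈ Icc (0 : ℝ) 1, d ≤ μ x) :
    ∫ x in (0 : ℝ)..1, (σ x ^ 2 * μ x)⁻¹ ≤ (d ^ 3)⁻¹ := by
  have hbound := intervalIntegral_le_mul_sub zero_le_one
    (hσ.sq_mul hμ).inv.intervalIntegrable_zero_one (K := (d ^ 3)⁻¹) fun x hx ↦ ?_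
  · simpa using hbound
  · have := hσd x hx
    have := hμd x hx
    calc (σ x ^ 2 * μ x)⁻¹ ≤ (d ^ 2 * d)⁻¹ := by gcongr
      _ = (d ^ 3)⁻¹ := by ring

lemma le_lam1 (hd : 0 < d) (hσ : IsWeight σ) (hμ : IsWeight μ)
    (hσd : ∀ x ∈ Icc (0 : ℝ) 1, d ≤ σ x) (hμd : ∀ x ∈ Icc (0 : ℝ) 1, d ≤ μ x)
    (hμD : ∀ x ∈ Icc (0 : ℝ) 1, μ x ≤ D) : d ^ 3 / (2 * D) ≤ lam1 σ μ := by
  have hmass : ∫ x in (0 : ℝ)..1, μ x ≤ D := by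
    simpa using intervalIntegral_le_mul_sub zero_le_one hμ.intervalIntegrable_zero_one hμD
  have hM := hμ.integral_pos le_rfl one_pos le_rfl
  have hS := (hσ.sq_mul hμ).inv.integral_pos le_rfl one_pos le_rfl
  have hD := hM.trans_le hmass
  have hlam1 : (D * (d ^ 3)⁻¹)⁻¹ ≤ 2 * lam1 σ μ :=
    calc (D * (d ^ 3)⁻¹)⁻¹
        ≤ ((∫ x in (0 : ℝ)..1, μ x) * ∫ x in (0 : ℝ)..1, (σ x ^ 2 * μ x)⁻¹)⁻¹ := by
          gcongr
          exact integral_inv_sq_mul_le hd hσ hμ hσd hμd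
      _ ≤ 2 * lam1 σ μ := le_two_mul_lam1_of_poincareBound hμ
          (poincareBound_inv_integral_mul_integral_inv hμ (hσ.sq_mul hμ))
  calc d ^ 3 / (2 * D) = (D * (d ^ 3)⁻¹)⁻¹ / 2 := by field_simp
    _ ≤ lam1 σ μ := by linarith

lemma min_le_splitGain_half (hd : 0 < d) (hσ : IsWeight σ) (hμ : IsWeight μ)
    (hσd : ∀ x ∈ Icc (0 : ℝ) 1, d ≤ σ x) (hμd : ∀ x ∈ Icc (0 : ℝ) 1, d ≤ μ x)
    (hμD : ∀ x ∈ Icc (0 : ℝ) 1, μ x ≤ D) (κ : ℝ) :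
    min κ (d ^ 4 / (16 * D ^ 2)) ≤ splitGain μ (fun x ↦ σ x ^ 2 * μ x) (1 / 2) κ := by
  have hmass : ∫ x in (0 : ℝ)..1, μ x ≤ D := by
    simpa using intervalIntegral_le_mul_sub zero_le_one hμ.intervalIntegrable_zero_one hμD
  have hhalf {a b : ℝ} (ha : 0 ≤ a) (hab : a ≤ b) (hb : b ≤ 1) (hlen : b - a = 1 / 2) :
      d / 2 ≤ ∫ x in a..b, μ x := by
    rw [div_eq_mul_one_div, ← hlen]
    exact mul_sub_le_intervalIntegral hab
      (hμ.intervalIntegrable ⟨ha, hab.trans hb⟩ ⟨ha.trans hab, hb⟩)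
      fun x hx ↦ hμd x (Icc_subset_Icc ha hb hx)
  have hM := hμ.integral_pos le_rfl one_pos le_rfl
  have hS := (hσ.sq_mul hμ).inv.integral_pos le_rfl one_pos le_rfl
  have hM₁ := hμ.integral_pos (b := 1 / 2) le_rfl one_half_pos one_half_lt_one.le
  have hM₂ := hμ.integral_pos (a := 1 / 2) one_half_pos.le one_half_lt_one le_rfl
  have hD := hM.trans_le hmass
  refine min_le_min_left κ ?_
  calc d ^ 4 / (16 * D ^ 2) = (4 * (D ^ 2 * (d ^ 3)⁻¹ * ((d / 2)⁻¹ + (d / 2)⁻¹)))⁻¹ := by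
        field_simp
        norm_num
    _ ≤ _ := by
        gcongr
        · exact integral_inv_sq_mul_le hd hσ hμ hσd hμd
        · exact hhalf le_rfl one_half_pos.le one_half_lt_one.le (sub_zero _)
        · exact hhalf one_half_pos.le one_half_lt_one.le le_rfl (sub_half 1)

lemma integral_sq_mul_le_mul_integral_sq (hσ : IsWeight σ) (hμ : IsWeight μ)
    (hμD : ∀ x ∈ Icc (0 : ℝ) 1, μ x ≤ D) :
    ∫ x in (0 : ℝ)..1, σ x ^ 2 * μ x ≤ D * ∫ x in (0 : ℝ)..1, σ x ^ 2 := by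
  rw [← intervalIntegral.integral_const_mul]
  refine intervalIntegral.integral_mono_on zero_le_one (hσ.sq_mul hμ).intervalIntegrable_zero_one
    (((hσ.continuousOn.fun_pow 2).intervalIntegrable_of_Icc zero_le_one).const_mul D)
    fun x hx ↦ ?_
  rw [mul_comm]
  exact mul_le_mul_of_nonneg_right (hμD x hx) (sq_nonneg _)

lemma lam2_le (hd : 0 < d) (hD : 0 ≤ D) (hσ : IsWeight σ) (hμ : IsWeight μ)
    (hμd : ∀ x ∈ Icc (0 : ℝ) 1, d ≤ μ x) (hμD : ∀ x ∈ Icc (0 : ℝ) 1, μ x ≤ D)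
    (hσD : ∫ x in (0 : ℝ)..1, σ x ^ 2 ≤ D ^ 2) : lam2 σ μ ≤ 180 * D ^ 3 / d := by
  refine (lam2_le_mul_integral_div hσ hμ hd hμd).trans ?_
  gcongr
  calc ∫ x in (0 : ℝ)..1, σ x ^ 2 * μ x ≤ D * ∫ x in (0 : ℝ)..1, σ x ^ 2 :=
        integral_sq_mul_le_mul_integral_sq hσ hμ hμD
    _ ≤ D * D ^ 2 := by gcongr
    _ = D ^ 3 := by ring

theorem statement1_general (hd : 0 < d) (hσ : ContinuousOn σ (Icc 0 1))
    (hμ : ContinuousOn μ (Icc 0 1)) (hσd : ∀ x ∈ Icc (0 : ℝ) 1, d ≤ σ x)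
    (hμd : ∀ x ∈ Icc (0 : ℝ) 1, d ≤ μ x) (hμD : ∀ x ∈ Icc (0 : ℝ) 1, μ x ≤ D)
    (hσD : ∫ x in (0 : ℝ)..1, σ x ^ 2 ≤ D ^ 2) :
    d ^ 4 / (32 * D ^ 2) ≤ lam1 σ μ ∧ lam1 σ μ ≤ 180 * D ^ 3 / d ∧
      lam2 σ μ ≤ 180 * D ^ 3 / d ∧ d ^ 4 / (32 * D ^ 2) ≤ lam2 σ μ - lam1 σ μ := by
  have hdD : d ≤ D := (hμd 0 (by simp)).trans (hμD 0 (by simp))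
  have hD : 0 < D := hd.trans_le hdD
  have hσw : IsWeight σ := ⟨hσ, fun x hx ↦ hd.trans_le (hσd x hx)⟩
  have hμw : IsWeight μ := ⟨hμ, fun x hx ↦ hd.trans_le (hμd x hx)⟩
  have hlam1 : d ^ 3 / (2 * D) ≤ lam1 σ μ := le_lam1 hd hσw hμw hσd hμd hμD
  have hε : d ^ 4 / (32 * D ^ 2) ≤ lam1 σ μ := by
    refine le_trans ?_ hlam1
    rw [div_le_div_iff₀ (by positivity) (by positivity)]
    calc d ^ 4 * (2 * D) = d ^ 3 * (2 * d * D) := by ring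
      _ ≤ d ^ 3 * (32 * D * D) := by gcongr; linarith
      _ = d ^ 3 * (32 * D ^ 2) := by ring
  have hlam1_pos : 0 < lam1 σ μ := lt_of_lt_of_le (by positivity) hε
  have hgap : d ^ 4 / (32 * D ^ 2) ≤ lam2 σ μ - lam1 σ μ := by
    have hsplit := two_mul_lam1_add_splitGain_le_two_mul_lam2 hσw hμw hlam1_pos
      (c := 1 / 2) (by constructor <;> norm_num)
    have hgain := min_le_splitGain_half hd hσw hμw hσd hμd hμD (2 * lam1 σ μ)
    have htwice : d ^ 4 / (16 * D ^ 2) = 2 * (d ^ 4 / (32 * D ^ 2)) := by ring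
    rw [min_eq_right (by linarith)] at hgain
    linarith
  have hlam2 : lam2 σ μ ≤ 180 * D ^ 3 / d := lam2_le hd hD.le hσw hμw hμd hμD hσD
  have hε_pos : 0 < d ^ 4 / (32 * D ^ 2) := by positivity
  exact ⟨hε, by linarith, hlam2, hgap⟩

end UniformBounds

section Regularity

variable {f f' : ℝ → ℝ}

lemma continuousOn_of_sub_eq_integral {a b : ℝ} (hab : a ≤ b)
    (h : ∀ x y : ℝ, a ≤ x → x ≤ y → y ≤ b → f y - f x = ∫ z in x..y, f' z) :
    ContinuousOn f (Icc a b) := by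
  by_cases hint : IntervalIntegrable f' volume a b
  · have hprimitive := intervalIntegral.continuousOn_primitive_interval' hint left_mem_uIcc
    rw [uIcc_of_le hab] at hprimitive
    exact (hprimitive.const_add (f a)).congr fun x hx ↦
      eq_add_of_sub_eq' (h a x le_rfl hx.1 hx.2)
  -- The integral of a non-integrable function is `0`, so here `f` is constant.
  · have heq {x y : ℝ} (hx : a ≤ x) (hxy : x ≤ y) (hy : y ≤ b)
        (hxy_int : ¬IntervalIntegrable f' volume x y) : f y = f x := by
      rw [← sub_eq_zero, h x y hx hxy hy, intervalIntegral.integral_undef hxy_int]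
    refine (continuousOn_const (c := f a)).congr fun x hx ↦ ?_
    by_cases hleft : IntervalIntegrable f' volume a x
    · have hright : ¬IntervalIntegrable f' volume x b := fun hright ↦ hint (hleft.trans hright)
      exact (heq hx.1 hx.2 le_rfl hright).symm.trans (heq le_rfl hab le_rfl hint)
    · exact heq le_rfl hx.1 hx.2 hleft

lemma continuousOn_of_abs_sub_le_mul_rpow {s : Set ℝ} {H α : ℝ} (hα : 0 < α)
    (h : ∀ x ∈ s, ∀ y ∈ s, |f x - f y| ≤ H * |x - y| ^ α) : ContinuousOn f s := by
  intro y hy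
  refine tendsto_iff_dist_tendsto_zero.2 (squeeze_zero' (.of_forall fun _ ↦ dist_nonneg)
    (eventually_mem_nhdsWithin.mono fun x hx ↦ h x hx y hy) ?_)
  have hcont : Continuous fun x ↦ H * |x - y| ^ α := by fun_prop (disch := exact hα.le)
  simpa [hα.ne'] using (hcont.tendsto y).mono_left nhdsWithin_le_nhds

end Regularity

/-- Uniform bounds on the first two variational Neumann eigenvalues and on the spectral gap
over the nonparametric class `Θ_α`. -/
theorem statement1 (d D α : ℝ) (hd : 0 < d) (hdD : d < D) (hα : 0 < α) (hα1 : α ≤ 1) :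
    ∃ ε C : ℝ, 0 < ε ∧ 0 < C ∧
      ∀ σ σ' μ : ℝ → ℝ,
        -- σ absolutely continuous with a.e. derivative σ'
        (∀ x y : ℝ, 0 ≤ x → x ≤ y → y ≤ 1 → σ y - σ x = ∫ z in x..y, σ' z) →
        -- H¹-type bound on σ
        Real.sqrt (∫ x in (0:ℝ)..1, (σ x)^2)
          + Real.sqrt (∫ x in (0:ℝ)..1, (σ' x)^2) ≤ D →
        -- α-Hölder bound on μ
        (∃ M H : ℝ, (∀ x ∈ Set.Icc (0:ℝ) 1, |μ x| ≤ M) ∧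
          (∀ x ∈ Set.Icc (0:ℝ) 1, ∀ y ∈ Set.Icc (0:ℝ) 1,
            |μ x - μ y| ≤ H * |x - y| ^ α) ∧
          M + H ≤ D) →
        -- lower bounds
        (∀ x ∈ Set.Icc (0:ℝ) 1, d ≤ σ x) → (∀ x ∈ Set.Icc (0:ℝ) 1, d ≤ μ x) →
        -- μ is a probability density
        (∫ x in (0:ℝ)..1, μ x) = 1 →
        ε ≤ lam1 σ μ ∧ lam1 σ μ ≤ C ∧ lam2 σ μ ≤ C ∧ ε ≤ lam2 σ μ - lam1 σ μ := by
  have hD : 0 < D := hd.trans hdD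
  refine ⟨d ^ 4 / (32 * D ^ 2), 180 * D ^ 3 / d, by positivity, by positivity, ?_⟩
  rintro σ σ' μ hσ hσ_norm ⟨M, H, hM, hH, hMH⟩ hσd hμd -
  have hH_nonneg : 0 ≤ H := by
    simpa using (abs_nonneg (μ 0 - μ 1)).trans (hH 0 (by simp) 1 (by simp))
  have hσ_sq : ∫ x in (0 : ℝ)..1, σ x ^ 2 ≤ D ^ 2 :=
    (Real.sqrt_le_left hD.le).1 ((le_add_of_nonneg_right (Real.sqrt_nonneg _)).trans hσ_norm)
  exact statement1_general hd (continuousOn_of_sub_eq_integral zero_le_one hσ)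
    (continuousOn_of_abs_sub_le_mul_rpow hα hH) hσd hμd
    (fun x hx ↦ by linarith [le_abs_self (μ x), hM x hx]) hσ_sq
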